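/- arXiv:1805.09956 — 2 statements merged into one kernel-verified Lean document; each statement's English description precedes it below -/
import Mathlib

section
/- Let η ≥ 2 and ρ ≥ 1 be integers, set d_h = η^{ρ−h+3} for 1 ≤ h ≤ ρ, and let ℓ' be a positive integral multiple of d₁ = η^{ρ+2}. Then there exist 2^ρ ρ-hierarchical systems of intervals H₁,…,H_{2^ρ} of [ℓ'] such that every integer in [ℓ'] belongs to exactly one of them. -/
/-!
For every level `h`, cut the positive integers into consecutive blocks of length `d h`. Two distinct
blocks of the same level whose numbers have the same parity have a whole block between them, so they
are `d h`-separated. Since the lengths form a divisibility chain, the cuts of different levels are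
nested, and the block of level `ρ` containing `x` determines the blocks of all earlier levels
containing `x`. Attach to `x` the vector of parities of its `ρ` block numbers; the system belonging
to a vector `p ∈ (ℤ/2)^ρ` consists of the blocks whose parities at their own and all earlier levels
are those of `p`. The only system that covers `x` is then the one belonging to the parity vector
of `x`.
-/


open Finset

abbrev Vtx := ℕ × ℕ
abbrev DPair := Vtx × Vtx

/-- The grid graph on rows `r₁..r₂` and columns `c₁..c₂` (vertices outside are isolated). -/
def rectGrid (r₁ r₂ c₁ c₂ : ℕ) : SimpleGraph Vtx :=
  SimpleGraph.fromRel (fun u v =>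
    r₁ ≤ u.1 ∧ u.1 ≤ r₂ ∧ c₁ ≤ u.2 ∧ u.2 ≤ c₂ ∧
    r₁ ≤ v.1 ∧ v.1 ≤ r₂ ∧ c₁ ≤ v.2 ∧ v.2 ≤ c₂ ∧
    ((u.1 = v.1 ∧ u.2 + 1 = v.2) ∨ (u.2 = v.2 ∧ u.1 + 1 = v.1)))

/-- The ℓ×ℓ grid graph. -/
def gridG (ℓ : ℕ) : SimpleGraph Vtx := rectGrid 1 ℓ 1 ℓ

/-- The demand pairs of `M` can be simultaneously routed via node-disjoint paths in `G`. -/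
def NodeDisjointRoutable {V : Type*} (G : SimpleGraph V) (M : Finset (V × V)) : Prop :=
  ∃ P : ∀ m : {m // m ∈ M}, G.Walk m.val.1 m.val.2,
    (∀ m, (P m).IsPath) ∧
    ∀ m m' : {m // m ∈ M}, m ≠ m' → ∀ x, x ∈ (P m).support → x ∉ (P m').support

def OnTopRow (ℓ : ℕ) (v : Vtx) : Prop := v.1 = 1 ∧ 1 ≤ v.2 ∧ v.2 ≤ ℓ

def OnBoundary (ℓ : ℕ) (v : Vtx) : Prop :=
  1 ≤ v.1 ∧ v.1 ≤ ℓ ∧ 1 ≤ v.2 ∧ v.2 ≤ ℓ ∧ (v.1 = 1 ∨ v.1 = ℓ ∨ v.2 = 1 ∨ v.2 = ℓ)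

def DistinctSources (M : Finset DPair) : Prop := ∀ m ∈ M, ∀ m' ∈ M, m.1 = m'.1 → m = m'
def DistinctDests (M : Finset DPair) : Prop := ∀ m ∈ M, ∀ m' ∈ M, m.2 = m'.2 → m = m'

noncomputable def lg (n : ℕ) : ℝ := Real.logb 2 n

def IsIntervalIn (W : ℕ) (I : Finset ℕ) : Prop :=
  ∃ a b : ℕ, 1 ≤ a ∧ a ≤ b ∧ b ≤ W ∧ I = Finset.Icc a b

def IntSeparated (d : ℕ) (I J : Finset ℕ) : Prop :=
  ∀ i ∈ I, ∀ j ∈ J, (d : ℤ) < |(i : ℤ) - (j : ℤ)|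

def IsCanonicalIntervals (W d : ℕ) (Is : Finset (Finset ℕ)) : Prop :=
  (∀ I ∈ Is, IsIntervalIn W I ∧ I.card = d) ∧
    ∀ I ∈ Is, ∀ J ∈ Is, I ≠ J → IntSeparated d I J

abbrev SquareSpec := Finset ℕ × Finset ℕ

def memSquare (v : Vtx) (Q : SquareSpec) : Prop := v.1 ∈ Q.1 ∧ v.2 ∈ Q.2

instance (v : Vtx) (Q : SquareSpec) : Decidable (memSquare v Q) := by
  unfold memSquare; infer_instance

def IsCanonicalSquares (W d : ℕ) (Qs : Finset SquareSpec) : Prop :=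
  ∃ I₁ I₂ : Finset (Finset ℕ),
    IsCanonicalIntervals W d I₁ ∧ IsCanonicalIntervals W d I₂ ∧ Qs = I₁ ×ˢ I₂

/-- The number of sources of `M` lying on the shadow of the square `Q` with respect to `M`,
i.e. on the shortest sub-path of the top row containing all sources of pairs of `M` whose
destination lies in `Q`. -/
def shadowCount (M : Finset DPair) (Q : SquareSpec) : ℕ :=
  (M.filter (fun m => ∃ m₁ ∈ M, memSquare m₁.2 Q ∧ ∃ m₂ ∈ M, memSquare m₂.2 Q ∧
      m₁.1.2 ≤ m.1.2 ∧ m.1.2 ≤ m₂.1.2)).card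

/-- The square `Q` (of side `d`) has the β-shadow property with respect to `M`. -/
def HasShadowProp (β : ℝ) (d : ℕ) (M : Finset DPair) (Q : SquareSpec) : Prop :=
  (shadowCount M Q : ℝ) ≤ β * d

/-- A ρ-hierarchical system of intervals of `[W]`: for every level `1 ≤ h ≤ ρ`, `Is h` is a
`d_h`-canonical family of intervals (with `d_h = η^(ρ-h+3)`), and every level-`h` interval
is contained in a level-`(h-1)` interval. -/
def IsHierIntervals (W η ρ : ℕ) (Is : ℕ → Finset (Finset ℕ)) : Prop :=
  (∀ h, 1 ≤ h → h ≤ ρ → IsCanonicalIntervals W (η ^ (ρ - h + 3)) (Is h)) ∧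
    ∀ h, 1 < h → h ≤ ρ → ∀ I ∈ Is h, ∃ I' ∈ Is (h - 1), I ⊆ I'

/-- A hierarchical system of intervals of `[W]` with `ρ` levels and arbitrary interval lengths
`d h`. The levels are numbered `1, …, ρ`, as in `IsHierIntervals`, which is the case
`d h = η ^ (ρ - h + 3)`. -/
def IsHierIntervalsOfLengths (W : ℕ) (d : ℕ → ℕ) (ρ : ℕ) (Is : ℕ → Finset (Finset ℕ)) : Prop :=
  (∀ h, 1 ≤ h → h ≤ ρ → IsCanonicalIntervals W (d h) (Is h)) ∧
    ∀ h, 1 < h → h ≤ ρ → ∀ I ∈ Is h, ∃ I' ∈ Is (h - 1), I ⊆ I'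

section Block

/-- The `k`-th block, counted from `0`, in the partition of the positive integers into consecutive
intervals of length `d`. -/
def block (d k : ℕ) : Finset ℕ := Icc (k * d + 1) ((k + 1) * d)

/-- The number of the block of length `d` that contains the positive integer `x`. -/
def blockIndex (d x : ℕ) : ℕ := (x - 1) / d

variable {d e k l x y W : ℕ}

theorem mem_block_iff (hd : 0 < d) : x ∈ block d k ↔ 1 ≤ x ∧ blockIndex d x = k := by
  rw [block, blockIndex, mem_Icc, Nat.div_eq_iff hd, add_one_mul]
  omega

theorem mem_block_blockIndex (hd : 0 < d) (hx : 1 ≤ x) : x ∈ block d (blockIndex d x) :=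
  (mem_block_iff hd).2 ⟨hx, rfl⟩

theorem card_block (d k : ℕ) : (block d k).card = d := by
  rw [block, Nat.card_Icc, add_one_mul]
  omega

theorem isIntervalIn_block (hd : 0 < d) (hk : k < W / d) : IsIntervalIn W (block d k) :=
  ⟨k * d + 1, (k + 1) * d, by omega, by rw [add_one_mul]; omega,
    (Nat.le_div_iff_mul_le hd).1 hk, rfl⟩

theorem blockIndex_lt_div (hd : d ∣ W) (hx : x ∈ Icc 1 W) : blockIndex d x < W / d := by
  rw [mem_Icc] at hx
  exact Nat.div_lt_div_of_lt_of_dvd hd (by omega)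

theorem add_lt_of_mem_block (hkl : k + 2 ≤ l) (hx : x ∈ block d k) (hy : y ∈ block d l) :
    x + d < y := by
  rw [block, mem_Icc] at hx hy
  calc x + d ≤ (k + 1) * d + d := by gcongr; exact hx.2
    _ = (k + 2) * d := by ring
    _ ≤ l * d := by gcongr
    _ < y := hy.1

theorem intSeparated_block (hne : k ≠ l) (hmod : k ≡ l [MOD 2]) :
    IntSeparated d (block d k) (block d l) := by
  intro x hx y hy
  rw [Nat.ModEq] at hmod
  obtain hkl | hlk : k + 2 ≤ l ∨ l + 2 ≤ k := by omega
  · have := add_lt_of_mem_block hkl hx hy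
    exact lt_abs.2 (by omega)
  · have := add_lt_of_mem_block hlk hy hx
    exact lt_abs.2 (by omega)

theorem blockIndex_eq_of_dvd (hde : d ∣ e) (h : blockIndex d x = blockIndex d y) :
    blockIndex e x = blockIndex e y := by
  obtain ⟨m, rfl⟩ := hde
  simp only [blockIndex, ← Nat.div_div_eq_div_mul] at h ⊢
  rw [h]

theorem block_blockIndex_subset (hd : 0 < d) (he : 0 < e) (hde : d ∣ e) (x : ℕ) :
    block d (blockIndex d x) ⊆ block e (blockIndex e x) := by
  intro y hy
  obtain ⟨hy1, hyx⟩ := (mem_block_iff hd).1 hy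
  exact (mem_block_iff he).2 ⟨hy1, blockIndex_eq_of_dvd hde hyx⟩

end Block

section ParitySystem

/-- The parities of the numbers of the blocks of levels `1, …, ρ` that contain `x`. Levels count
from `1`, so coordinate `j` refers to level `j + 1`. -/
def parityVector (d : ℕ → ℕ) (ρ x : ℕ) : Fin ρ → ZMod 2 :=
  fun j => blockIndex (d (j + 1)) x

/-- The system of intervals attached to `p`: level `h` consists of the blocks of length `d h` around
those points of `[W]` whose parity vector agrees with `p` in levels `1, …, h`. -/
def paritySystem (W : ℕ) (d : ℕ → ℕ) {ρ : ℕ} (p : Fin ρ → ZMod 2) (h : ℕ) : Finset (Finset ℕ) :=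
  {x ∈ Icc 1 W | ∀ j : Fin ρ, j < h → parityVector d ρ x j = p j}.image
    fun x => block (d h) (blockIndex (d h) x)

variable {W : ℕ} {d : ℕ → ℕ} {ρ h : ℕ} {p : Fin ρ → ZMod 2}

theorem mem_paritySystem {I : Finset ℕ} :
    I ∈ paritySystem W d p h ↔ ∃ x ∈ Icc 1 W,
      (∀ j : Fin ρ, j < h → parityVector d ρ x j = p j) ∧
        block (d h) (blockIndex (d h) x) = I := by
  simp only [paritySystem, mem_image, mem_filter, and_assoc]

theorem pos_of_dvd_of_mem_Icc {m x : ℕ} (hm : m ∣ W) (hx : x ∈ Icc 1 W) : 0 < m :=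
  Nat.pos_of_dvd_of_pos hm (nonempty_Icc.1 ⟨x, hx⟩)

theorem isCanonicalIntervals_paritySystem (h1 : 1 ≤ h) (hρ : h ≤ ρ) (hdW : d h ∣ W) :
    IsCanonicalIntervals W (d h) (paritySystem W d p h) := by
  constructor
  · intro I hI
    obtain ⟨x, hx, -, rfl⟩ := mem_paritySystem.1 hI
    exact ⟨isIntervalIn_block (pos_of_dvd_of_mem_Icc hdW hx) (blockIndex_lt_div hdW hx),
      card_block _ _⟩
  · intro I hI J hJ hne
    obtain ⟨x, -, hxp, rfl⟩ := mem_paritySystem.1 hI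
    obtain ⟨y, -, hyp, rfl⟩ := mem_paritySystem.1 hJ
    obtain ⟨j, rfl⟩ := Nat.exists_eq_add_of_le' h1
    have same_parity : parityVector d ρ x ⟨j, hρ⟩ = parityVector d ρ y ⟨j, hρ⟩ :=
      (hxp _ j.lt_succ_self).trans (hyp _ j.lt_succ_self).symm
    exact intSeparated_block (ne_of_apply_ne _ hne)
      ((ZMod.natCast_eq_natCast_iff _ _ 2).1 same_parity)

theorem exists_superset_mem_paritySystem {g : ℕ} (hgh : g ≤ h) (hd : d h ∣ d g) (hdW : d g ∣ W)
    {I : Finset ℕ} (hI : I ∈ paritySystem W d p h) : ∃ I' ∈ paritySystem W d p g, I ⊆ I' := by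
  obtain ⟨x, hx, hxp, rfl⟩ := mem_paritySystem.1 hI
  refine ⟨_, mem_paritySystem.2 ⟨x, hx, fun j hj => hxp j (hj.trans_le hgh), rfl⟩, ?_⟩
  exact block_blockIndex_subset (pos_of_dvd_of_mem_Icc (hd.trans hdW) hx)
    (pos_of_dvd_of_mem_Icc hdW hx) hd x

theorem isHierIntervalsOfLengths_paritySystem (hd : ∀ ⦃g h⦄, g ≤ h → d h ∣ d g) (hdW : d 1 ∣ W)
    (p : Fin ρ → ZMod 2) : IsHierIntervalsOfLengths W d ρ (paritySystem W d p) :=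
  ⟨fun _ h1 hρ => isCanonicalIntervals_paritySystem h1 hρ ((hd h1).trans hdW),
    fun h h1 _ _ => exists_superset_mem_paritySystem (h.sub_le 1) (hd (h.sub_le 1))
      ((hd (Nat.le_sub_one_of_lt h1)).trans hdW)⟩

theorem parityVector_eq_of_blockIndex_eq (hd : ∀ ⦃g h⦄, g ≤ h → d h ∣ d g) {x y : ℕ}
    (hxy : blockIndex (d ρ) x = blockIndex (d ρ) y) : parityVector d ρ x = parityVector d ρ y :=
  funext fun j => congrArg Nat.cast (blockIndex_eq_of_dvd (hd j.isLt) hxy)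

theorem exists_mem_paritySystem_iff (hd : ∀ ⦃g h⦄, g ≤ h → d h ∣ d g) (hdW : d ρ ∣ W) {x : ℕ}
    (hx : x ∈ Icc 1 W) : (∃ I ∈ paritySystem W d p ρ, x ∈ I) ↔ p = parityVector d ρ x := by
  have hpos : 0 < d ρ := pos_of_dvd_of_mem_Icc hdW hx
  constructor
  · rintro ⟨I, hI, hxI⟩
    obtain ⟨y, -, hyp, rfl⟩ := mem_paritySystem.1 hI
    rw [parityVector_eq_of_blockIndex_eq hd ((mem_block_iff hpos).1 hxI).2]
    exact funext fun j => (hyp j j.isLt).symm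
  · rintro rfl
    exact ⟨_, mem_paritySystem.2 ⟨x, hx, fun _ _ => rfl, rfl⟩,
      mem_block_blockIndex hpos (mem_Icc.1 hx).1⟩

end ParitySystem

theorem statement8_general (W ρ : ℕ) (hρ : 1 ≤ ρ) (d : ℕ → ℕ)
    (hd : ∀ ⦃g h⦄, g ≤ h → d h ∣ d g) (hdW : d 1 ∣ W) :
    ∃ H : Fin (2 ^ ρ) → ℕ → Finset (Finset ℕ),
      (∀ i, IsHierIntervalsOfLengths W d ρ (H i)) ∧
      ∀ x : ℕ, 1 ≤ x → x ≤ W →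
        ∃! i : Fin (2 ^ ρ), ∃ I ∈ (H i) ρ, x ∈ I := by
  obtain ⟨vector⟩ : Nonempty (Fin (2 ^ ρ) ≃ (Fin ρ → ZMod 2)) :=
    Fintype.card_eq.1 (by simp [ZMod.card])
  refine ⟨fun i => paritySystem W d (vector i),
    fun i => isHierIntervalsOfLengths_paritySystem hd hdW (vector i), fun x hx1 hxW => ?_⟩
  simp only [exists_mem_paritySystem_iff hd ((hd hρ).trans hdW) (mem_Icc.2 ⟨hx1, hxW⟩)]
  exact vector.bijective.existsUnique (parityVector d ρ x)

/-- Observation: canonical hierarchical systems of intervals.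
There are `2^ρ` ρ-hierarchical systems of intervals of `[ℓ']` such that every integer of
`[ℓ']` belongs (i.e. lies in a level-ρ interval) to exactly one of them. -/
theorem statement8
    (η ρ W : ℕ) (hη : 2 ≤ η) (hρ : 1 ≤ ρ) (hW : 0 < W)
    (hdvd : η ^ (ρ + 2) ∣ W) :
    ∃ H : Fin (2 ^ ρ) → ℕ → Finset (Finset ℕ),
      (∀ i, IsHierIntervals W η ρ (H i)) ∧
      ∀ x : ℕ, 1 ≤ x → x ≤ W →
        ∃! i : Fin (2 ^ ρ), ∃ I ∈ (H i) ρ, x ∈ I := by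
  exact statement8_general W ρ hρ (fun h => η ^ (ρ - h + 3))
    (fun _ _ hgh => pow_dvd_pow η (by omega)) ((pow_dvd_pow η (by omega)).trans hdvd)
end

section
/- There is a universal constant c > 0 such that the following holds. Let n be such that √n is an even positive integer, let G be the √n×√n grid and Ĝ ⊆ G the wall of length √n/2 and height √n obtained from it, and let M be a set of demand pairs in Ĝ, with all sources distinct and all destinations distinct, such that every source lies on the boundary Γ(Ĝ) of the wall. Let M' = {(s',t) : (s,t) ∈ M}, where s' = s if s ∈ Γ(G); s' is the vertex of Γ(G) lying immediately to the left of s if s belongs to the first column of Ĝ; and s' is the vertex of Γ(G) lying immediately to the right of s if s belongs to the last column of Ĝ. Then OPT_NDP(Ĝ,M') ≥ c·OPT_NDP(Ĝ,M); moreover, for every set P' of pairwise node-disjoint paths in Ĝ routing a subset of the demand pairs of M', there exists a set of at least c·|P'| pairwise node-disjoint paths in Ĝ routing a subset of the demand pairs of M. -/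
/-!
Relocation moves each source to itself or to a neighbour in the wall. So prepending a single vertex,
the new source, to each path of a routing yields paths for the relocated pairs, and two of these can
clash only where the new source of one pair lies on the old path of another. The old paths are
disjoint, so each new source lies on at most one of them: the clash relation has out-degree at most
one. By averaging some pair then has in-degree at most one, so keeping it costs at most two others,
and greedily a third of the pairs can be kept without clashes. Undoing the relocation is the same
argument, because being equal or adjacent is symmetric.

Two relocated sources may also coincide, but only if one of them did not move, and then it is again
a new source lying on an old path.
-/

open Finset

/-- The grid `G^{ℓ,h}` minus the edge set `E*(G)`: the vertical edge `e^j_z` (between rows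
`z` and `z+1` of column `j`) is kept iff `z ≡ j (mod 2)`. -/
def gridMinusE (ℓ h : ℕ) : SimpleGraph Vtx :=
  SimpleGraph.fromRel (fun u v =>
    1 ≤ u.1 ∧ u.1 ≤ h ∧ 1 ≤ u.2 ∧ u.2 ≤ ℓ ∧
    1 ≤ v.1 ∧ v.1 ≤ h ∧ 1 ≤ v.2 ∧ v.2 ≤ ℓ ∧
    ((u.1 = v.1 ∧ u.2 + 1 = v.2) ∨ (u.2 = v.2 ∧ u.1 + 1 = v.1 ∧ u.1 % 2 = u.2 % 2)))

/-- A vertex of the wall: a vertex of degree at least 2 in `gridMinusE`. -/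
def IsWallVertex (ℓ h : ℕ) (v : Vtx) : Prop :=
  2 ≤ ((gridMinusE ℓ h).neighborSet v).ncard

/-- The wall of length `ℓ/2` and height `h`. -/
def wallG (ℓ h : ℕ) : SimpleGraph Vtx :=
  SimpleGraph.fromRel (fun u v =>
    (gridMinusE ℓ h).Adj u v ∧ IsWallVertex ℓ h u ∧ IsWallVertex ℓ h v)

/-- Optimal value of the node-disjoint paths problem. -/
noncomputable def OPTn {V : Type*} (G : SimpleGraph V) (M : Finset (V × V)) : ℕ :=
  sSup {k | ∃ M' ⊆ M, M'.card = k ∧ NodeDisjointRoutable G M'}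

/-- The boundary `Γ(Ĝ)` of the wall obtained from the m×m grid: its first and last rows,
and its first and last columns (the latter occupy grid columns `{1,2}` and `{m-1,m}`). -/
def WallBoundary (m : ℕ) (v : Vtx) : Prop :=
  IsWallVertex m m v ∧
    (v.1 = 1 ∨ v.1 = m ∨ v.2 = 1 ∨ v.2 = 2 ∨ v.2 = m - 1 ∨ v.2 = m)

/-- Relocation of a source vertex of the wall boundary to the boundary `Γ(G)` of the
underlying grid: a vertex of `Γ(G)` is kept; a vertex of the first column of the wall
(grid column 2) moves one step left; a vertex of the last column of the wall (grid
column m-1) moves one step right. -/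
def relocate (m : ℕ) (s : Vtx) : Vtx :=
  if s.1 = 1 ∨ s.1 = m ∨ s.2 = 1 ∨ s.2 = m then s
  else if s.2 = 2 then (s.1, 1)
  else if s.2 = m - 1 then (s.1, m)
  else s

/-! ### Independent sets in relations of bounded out-degree -/

section OutDegree

variable {α : Type*} {R : α → α → Prop} [DecidableRel R] {A : Finset α} {d : ℕ}

theorem exists_card_filter_rel_right_le (hA : A.Nonempty) (hR : ∀ x ∈ A, #{y ∈ A | R x y} ≤ d) :
    ∃ v ∈ A, #{x ∈ A | R x v} ≤ d := by
  refine exists_le_of_sum_le hA ?_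
  calc
    ∑ v ∈ A, #{x ∈ A | R x v} = ∑ x ∈ A, #{y ∈ A | R x y} :=
      (sum_card_bipartiteAbove_eq_sum_card_bipartiteBelow R).symm
    _ ≤ ∑ _ ∈ A, d := sum_le_sum hR

theorem exists_subset_pairwise_not_rel (hR : ∀ x ∈ A, #{y ∈ A | R x y} ≤ d) :
    ∃ B ⊆ A, #A ≤ (2 * d + 1) * #B ∧ (B : Set α).Pairwise fun x y => ¬R x y := by
  classical
  induction A using Finset.strongInduction with
  | H A ih =>
    rcases A.eq_empty_or_nonempty with rfl | hA
    · exact ⟨∅, by simp⟩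
    obtain ⟨v, hvA, hin⟩ := exists_card_filter_rel_right_le hA hR
    let D := insert v ({x ∈ A | R x v} ∪ {y ∈ A | R v y})
    have hvD : v ∈ D := mem_insert_self _ _
    have hD : #D ≤ 2 * d + 1 := calc
      #D ≤ #({x ∈ A | R x v} ∪ {y ∈ A | R v y}) + 1 := card_insert_le _ _
      _ ≤ #{x ∈ A | R x v} + #{y ∈ A | R v y} + 1 := by gcongr; exact card_union_le _ _
      _ ≤ d + d + 1 := by gcongr; exact hR v hvA
      _ = 2 * d + 1 := by ring
    obtain ⟨B, hBA, hcard, hB⟩ := ih (A \ D)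
      ((ssubset_iff_of_subset sdiff_subset).2 ⟨v, hvA, fun h => (mem_sdiff.1 h).2 hvD⟩)
      (fun x hx => (card_le_card (filter_subset_filter _ sdiff_subset)).trans
        (hR x (mem_sdiff.1 hx).1))
    have hvB : v ∉ B := fun h => (mem_sdiff.1 (hBA h)).2 hvD
    refine ⟨insert v B, insert_subset hvA (hBA.trans sdiff_subset), ?_, ?_⟩
    · calc
        #A ≤ #(A \ D) + #D := card_le_card_sdiff_add_card
        _ ≤ (2 * d + 1) * #B + (2 * d + 1) := add_le_add hcard hD
        _ = (2 * d + 1) * #(insert v B) := by rw [card_insert_of_notMem hvB]; ring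
    · have hnot : ∀ x ∈ B, ¬R v x ∧ ¬R x v := by
        intro x hx
        obtain ⟨hxA, hxD⟩ := mem_sdiff.1 (hBA hx)
        simp only [D, mem_insert, mem_union, mem_filter, not_or, not_and] at hxD
        exact ⟨hxD.2.2 hxA, hxD.2.1 hxA⟩
      rw [coe_insert, Set.pairwise_insert]
      exact ⟨hB, fun x hx _ => hnot x hx⟩

end OutDegree

theorem exists_subset_pairwiseDisjoint_insert {ι V : Type*} {A : Finset ι} {S : ι → Set V}
    {x : ι → V} (hS : (A : Set ι).PairwiseDisjoint S) (hx : Set.InjOn x {i | i ∈ A ∧ x i ∉ S i}) :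
    ∃ B ⊆ A, #A ≤ 3 * #B ∧ (B : Set ι).PairwiseDisjoint fun i => insert (x i) (S i) := by
  classical
  obtain ⟨B, hBA, hcard, hB⟩ := exists_subset_pairwise_not_rel (A := A) (d := 1)
    (R := fun i j => x i ∈ S j) fun i _ => by
      simp only [card_le_one, mem_filter]
      exact fun j hj k hk => hS.elim_set hj.1 hk.1 _ hj.2 hk.2
  refine ⟨B, hBA, hcard, fun i hi j hj hij => ?_⟩
  have hne : x i ≠ x j := fun h => hij <| hx
    ⟨hBA hi, fun hxi => hB hj hi hij.symm (h ▸ hxi)⟩ ⟨hBA hj, fun hxj => hB hi hj hij (h ▸ hxj)⟩ h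
  rw [Function.onFun, Set.disjoint_insert_left, Set.disjoint_insert_right, Set.mem_insert_iff,
    not_or]
  exact ⟨⟨hne, hB hi hj hij⟩, hB hj hi hij.symm, hS (hBA hi) (hBA hj) hij⟩

/-! ### Rerouting disjoint paths from neighbouring sources -/

section Routing

variable {ι V : Type*} {G : SimpleGraph V}

/-- The vertices `u` and `v` are joined by a walk of `G` all of whose vertices lie in `S`. Recording
only the vertex sets of the paths of a routing avoids walks with dependent endpoints. -/
def LinkedWithin (G : SimpleGraph V) (S : Set V) (u v : V) : Prop :=
  ∃ p : G.Walk u v, ∀ x ∈ p.support, x ∈ S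

namespace LinkedWithin

variable {S : Set V} {u u' v : V}

theorem left_mem (h : LinkedWithin G S u v) : u ∈ S :=
  let ⟨p, hp⟩ := h
  hp u p.start_mem_support

theorem right_mem (h : LinkedWithin G S u v) : v ∈ S :=
  let ⟨p, hp⟩ := h
  hp v p.end_mem_support

theorem insert_left (h : LinkedWithin G S u v) (hu : u' = u ∨ G.Adj u' u) :
    LinkedWithin G (insert u' S) u' v := by
  obtain ⟨p, hp⟩ := h
  rcases hu with rfl | hu
  · exact ⟨p, fun x hx => Set.mem_insert_of_mem _ (hp x hx)⟩
  · exact ⟨p.cons hu, by simpa using fun x hx => Or.inr (hp x hx)⟩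

theorem exists_isPath (h : LinkedWithin G S u v) :
    ∃ p : G.Walk u v, p.IsPath ∧ ∀ x ∈ p.support, x ∈ S := by
  classical
  obtain ⟨p, hp⟩ := h
  exact ⟨p.bypass, p.bypass_isPath, fun x hx => hp x (p.support_bypass_subset_support hx)⟩

end LinkedWithin

theorem NodeDisjointRoutable.exists_pairwiseDisjoint {M : Finset (V × V)}
    (h : NodeDisjointRoutable G M) :
    ∃ S : V × V → Set V, (M : Set (V × V)).PairwiseDisjoint S ∧
      ∀ p ∈ M, LinkedWithin G (S p) p.1 p.2 := by
  obtain ⟨P, -, hP⟩ := h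
  refine ⟨fun p => {x | ∃ hp : p ∈ M, x ∈ (P ⟨p, hp⟩).support}, fun p hp q hq hpq => ?_,
    fun p hp => ⟨P ⟨p, hp⟩, fun x hx => ⟨hp, hx⟩⟩⟩
  rw [Function.onFun, Set.disjoint_left]
  rintro x ⟨_, hxp⟩ ⟨_, hxq⟩
  exact hP ⟨p, hp⟩ ⟨q, hq⟩ (fun h => hpq (congrArg Subtype.val h)) x hxp hxq

theorem nodeDisjointRoutable_image [DecidableEq V] {B : Finset ι} {f : ι → V × V} {S : ι → Set V}
    (hS : (B : Set ι).PairwiseDisjoint S) (hf : ∀ i ∈ B, LinkedWithin G (S i) (f i).1 (f i).2) :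
    NodeDisjointRoutable G (B.image f) := by
  have hpath : ∀ p : {p // p ∈ B.image f}, ∃ i ∈ B, f i = p ∧
      ∃ P : G.Walk p.1.1 p.1.2, P.IsPath ∧ ∀ x ∈ P.support, x ∈ S i := by
    rintro ⟨p, hp⟩
    obtain ⟨i, hi, rfl⟩ := mem_image.1 hp
    exact ⟨i, hi, rfl, (hf i hi).exists_isPath⟩
  choose i hi hfi P hP hPS using hpath
  refine ⟨P, hP, fun p q hpq x hxp hxq => hpq (Subtype.ext ?_)⟩
  have hij : i p = i q := hS.elim_set (hi p) (hi q) x (hPS p x hxp) (hPS q x hxq)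
  rw [← hfi p, ← hfi q, hij]

theorem exists_subset_nodeDisjointRoutable_image [DecidableEq V] {A : Finset ι} {s s' t : ι → V}
    (hinj : Set.InjOn (fun i => (s i, t i)) A)
    (hroute : NodeDisjointRoutable G (A.image fun i => (s i, t i)))
    (hadj : ∀ i ∈ A, s' i = s i ∨ G.Adj (s' i) (s i))
    (hcol : ∀ i ∈ A, ∀ j ∈ A, s' i = s' j → s i = s j ∨ s' i = s i ∨ s' j = s j) :
    ∃ B ⊆ A, #A ≤ 3 * #B ∧ Set.InjOn (fun i => (s' i, t i)) B ∧
      NodeDisjointRoutable G (B.image fun i => (s' i, t i)) := by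
  obtain ⟨S, hS, hlink⟩ := hroute.exists_pairwiseDisjoint
  replace hS : (A : Set ι).PairwiseDisjoint fun i => S (s i, t i) := by
    rw [coe_image] at hS
    exact hinj.pairwiseDisjoint_image.1 hS
  replace hlink : ∀ i ∈ A, LinkedWithin G (S (s i, t i)) (s i) (t i) :=
    fun i hi => hlink _ (mem_image_of_mem _ hi)
  have hs' : Set.InjOn s' {i | i ∈ A ∧ s' i ∉ S (s i, t i)} := by
    rintro i ⟨hi, hi'⟩ j ⟨hj, hj'⟩ hij
    have hsi := (hlink i hi).left_mem
    have hsj := (hlink j hj).left_mem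
    rcases hcol i hi j hj hij with h | h | h
    · exact hS.elim_set hi hj (s i) hsi (h ▸ hsj)
    · exact absurd (h ▸ hsi) hi'
    · exact absurd (h ▸ hsj) hj'
  obtain ⟨B, hBA, hcard, hB⟩ := exists_subset_pairwiseDisjoint_insert hS hs'
  have hlink' : ∀ i ∈ B, LinkedWithin G (insert (s' i) (S (s i, t i))) (s' i) (t i) :=
    fun i hi => (hlink i (hBA hi)).insert_left (hadj i (hBA hi))
  refine ⟨B, hBA, hcard, fun i hi j hj hij => ?_, nodeDisjointRoutable_image hB hlink'⟩
  have ht : t i = t j := congrArg Prod.snd hij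
  exact hB.elim_set hi hj (t i) (hlink' i hi).right_mem (ht ▸ (hlink' j hj).right_mem)

end Routing

/-! ### The optimal value -/

section OptimalValue

variable {V : Type*} {G : SimpleGraph V} {M N : Finset (V × V)}

theorem nodeDisjointRoutable_empty : NodeDisjointRoutable G ∅ :=
  ⟨fun p => absurd p.2 (notMem_empty _), fun p => absurd p.2 (notMem_empty _),
    fun p => absurd p.2 (notMem_empty _)⟩

theorem bddAbove_card_nodeDisjointRoutable (G : SimpleGraph V) (M : Finset (V × V)) :
    BddAbove {k | ∃ N ⊆ M, #N = k ∧ NodeDisjointRoutable G N} := by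
  refine ⟨#M, ?_⟩
  rintro _ ⟨N, hN, rfl, -⟩
  exact card_le_card hN

theorem NodeDisjointRoutable.card_le_OPTn (hN : NodeDisjointRoutable G N) (hNM : N ⊆ M) :
    #N ≤ OPTn G M :=
  le_csSup (bddAbove_card_nodeDisjointRoutable G M) ⟨N, hNM, rfl, hN⟩

theorem exists_card_eq_OPTn (G : SimpleGraph V) (M : Finset (V × V)) :
    ∃ N ⊆ M, #N = OPTn G M ∧ NodeDisjointRoutable G N := by
  refine Nat.sSup_mem (s := {k | ∃ N ⊆ M, #N = k ∧ NodeDisjointRoutable G N}) ?_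
    (bddAbove_card_nodeDisjointRoutable G M)
  exact ⟨0, ∅, empty_subset M, card_empty, nodeDisjointRoutable_empty⟩

end OptimalValue

/-! ### Relocating sources -/

section Relocation

variable {V : Type*} [DecidableEq V] {G : SimpleGraph V} {r : V → V} {M : Finset (V × V)}

theorem OPTn_le_three_mul_OPTn_image (hadj : ∀ p ∈ M, r p.1 = p.1 ∨ G.Adj (r p.1) p.1)
    (hcol : ∀ p ∈ M, ∀ q ∈ M, r p.1 = r q.1 → p.1 = q.1 ∨ r p.1 = p.1 ∨ r q.1 = q.1) :
    OPTn G M ≤ 3 * OPTn G (M.image fun p => (r p.1, p.2)) := by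
  obtain ⟨N, hNM, hNcard, hN⟩ := exists_card_eq_OPTn G M
  obtain ⟨B, hBN, hcard, hinj, hB⟩ := exists_subset_nodeDisjointRoutable_image
    (A := N) (s := Prod.fst) (s' := fun p => r p.1) (t := Prod.snd)
    (Set.injOn_id _) (by simpa using hN) (fun p hp => hadj p (hNM hp))
    (fun p hp q hq => hcol p (hNM hp) q (hNM hq))
  calc
    OPTn G M = #N := hNcard.symm
    _ ≤ 3 * #B := hcard
    _ = 3 * #(B.image fun p => (r p.1, p.2)) := by rw [card_image_of_injOn hinj]
    _ ≤ 3 * OPTn G (M.image fun p => (r p.1, p.2)) :=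
      Nat.mul_le_mul_left 3 (hB.card_le_OPTn (image_subset_image (hBN.trans hNM)))

theorem exists_subset_nodeDisjointRoutable_of_image {M'' : Finset (V × V)}
    (hadj : ∀ p ∈ M, r p.1 = p.1 ∨ G.Adj (r p.1) p.1)
    (hM'' : M'' ⊆ M.image fun p => (r p.1, p.2)) (hroute : NodeDisjointRoutable G M'') :
    ∃ M₀ ⊆ M, NodeDisjointRoutable G M₀ ∧ #M'' ≤ 3 * #M₀ := by
  obtain ⟨A, hAM, hinj, rfl⟩ :=
    exists_subset_injOn_image_eq_of_surjOn M M'' (by simpa [Set.SurjOn] using coe_subset.2 hM'')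
  obtain ⟨B, hBA, hcard, -, hB⟩ := exists_subset_nodeDisjointRoutable_image
    (s := fun p => r p.1) (s' := Prod.fst) (t := Prod.snd) hinj hroute
    (fun p hp => (hadj p (hAM hp)).imp Eq.symm SimpleGraph.Adj.symm)
    (fun p _ q _ h => Or.inl (congrArg r h))
  refine ⟨B, hBA.trans hAM, by simpa using hB, ?_⟩
  rwa [card_image_of_injOn hinj]

theorem statement13_general (hadj : ∀ p ∈ M, r p.1 = p.1 ∨ G.Adj (r p.1) p.1)
    (hcol : ∀ p ∈ M, ∀ q ∈ M, r p.1 = r q.1 → p.1 = q.1 ∨ r p.1 = p.1 ∨ r q.1 = q.1) :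
    1 / 3 * (OPTn G M : ℝ) ≤ (OPTn G (M.image fun p => (r p.1, p.2)) : ℝ) ∧
      ∀ M'' ⊆ M.image fun p => (r p.1, p.2), NodeDisjointRoutable G M'' →
        ∃ M₀ ⊆ M, NodeDisjointRoutable G M₀ ∧ 1 / 3 * (#M'' : ℝ) ≤ (#M₀ : ℝ) := by
  have third_le {a b : ℕ} (h : a ≤ 3 * b) : 1 / 3 * (a : ℝ) ≤ b := by
    have h' : (a : ℝ) ≤ 3 * b := by exact_mod_cast h
    linarith
  refine ⟨third_le (OPTn_le_three_mul_OPTn_image hadj hcol), fun M'' hM'' hroute => ?_⟩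
  obtain ⟨M₀, hM₀, hroute₀, hcard⟩ := exists_subset_nodeDisjointRoutable_of_image hadj hM'' hroute
  exact ⟨M₀, hM₀, hroute₀, third_le hcard⟩

end Relocation

/-! ### The wall -/

section Wall

variable {ℓ h i j k m : ℕ} {s t u v w : Vtx}

theorem gridMinusE_adj_horizontal (hi : 1 ≤ i) (hih : i ≤ h) (hj : 1 ≤ j) (hjl : j + 1 ≤ ℓ) :
    (gridMinusE ℓ h).Adj (i, j) (i, j + 1) := by
  rw [gridMinusE, SimpleGraph.fromRel_adj]
  refine ⟨by simp, Or.inl ?_⟩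
  dsimp only
  omega

theorem gridMinusE_adj_vertical (hi : 1 ≤ i) (hih : i + 1 ≤ h) (hj : 1 ≤ j) (hjl : j ≤ ℓ)
    (hpar : i % 2 = j % 2) : (gridMinusE ℓ h).Adj (i, j) (i + 1, j) := by
  rw [gridMinusE, SimpleGraph.fromRel_adj]
  refine ⟨by simp, Or.inl ?_⟩
  dsimp only
  omega

theorem mem_grid_of_gridMinusE_adj (huv : (gridMinusE ℓ h).Adj u v) :
    u ∈ Icc 1 h ×ˢ Icc 1 ℓ := by
  rw [gridMinusE, SimpleGraph.fromRel_adj] at huv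
  simp only [mem_product, mem_Icc]
  omega

theorem IsWallVertex.mem_grid (hv : IsWallVertex ℓ h v) : v ∈ Icc 1 h ×ˢ Icc 1 ℓ := by
  obtain ⟨w, hw⟩ := Set.nonempty_of_ncard_ne_zero (Nat.ne_of_gt (Nat.zero_lt_two.trans_le hv))
  exact mem_grid_of_gridMinusE_adj hw

theorem isWallVertex_of_adj (hu : (gridMinusE ℓ h).Adj v u) (hw : (gridMinusE ℓ h).Adj v w)
    (huw : u ≠ w) : IsWallVertex ℓ h v := by
  -- `Set.ncard` is `0` on infinite sets, hence the finiteness of the neighbourhood.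
  have hfin : ((gridMinusE ℓ h).neighborSet v).Finite :=
    (finite_toSet (Icc 1 h ×ˢ Icc 1 ℓ)).subset fun _ hx => mem_grid_of_gridMinusE_adj hx.symm
  rw [IsWallVertex, ← Set.ncard_pair huw]
  exact Set.ncard_le_ncard (Set.pair_subset hu hw) hfin

theorem exists_gridMinusE_adj_row_ne (hi : 2 ≤ i) (hih : i + 1 ≤ h) (hj : 1 ≤ j) (hjl : j ≤ ℓ) :
    ∃ w : Vtx, (gridMinusE ℓ h).Adj (i, j) w ∧ w.1 ≠ i := by
  by_cases hpar : i % 2 = j % 2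
  · exact ⟨(i + 1, j), gridMinusE_adj_vertical (by omega) hih hj hjl hpar, by simp⟩
  · obtain ⟨k, rfl⟩ : ∃ k, i = k + 1 := ⟨i - 1, by omega⟩
    exact ⟨(k, j), (gridMinusE_adj_vertical (by omega) (by omega) hj hjl (by omega)).symm, by simp⟩

theorem wallG_adj_of_inner_row (hi : 2 ≤ i) (hih : i + 1 ≤ h)
    (hjk : (gridMinusE ℓ h).Adj (i, j) (i, k)) : (wallG ℓ h).Adj (i, j) (i, k) := by
  have isWallVertex {a b : ℕ} (hab : (gridMinusE ℓ h).Adj (i, a) (i, b)) :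
      IsWallVertex ℓ h (i, a) := by
    have ha := mem_grid_of_gridMinusE_adj hab
    simp only [mem_product, mem_Icc] at ha
    obtain ⟨w, hw, hwi⟩ := exists_gridMinusE_adj_row_ne hi hih ha.2.1 ha.2.2
    exact isWallVertex_of_adj hab hw fun hkw => hwi (hkw ▸ rfl)
  rw [wallG, SimpleGraph.fromRel_adj]
  exact ⟨hjk.ne, Or.inl ⟨hjk, isWallVertex hjk, isWallVertex hjk.symm⟩⟩

theorem relocate_eq_self_or (m : ℕ) (s : Vtx) :
    relocate m s = s ∨ (s.1 ≠ 1 ∧ s.1 ≠ m) ∧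
      (s.2 = 2 ∧ relocate m s = (s.1, 1) ∨ s.2 + 1 = m ∧ relocate m s = (s.1, m)) := by
  unfold relocate
  split_ifs with hΓ hfirst hlast
  · exact Or.inl rfl
  · exact Or.inr ⟨by omega, Or.inl ⟨hfirst, rfl⟩⟩
  · exact Or.inr ⟨by omega, Or.inr ⟨by omega, rfl⟩⟩
  · exact Or.inl rfl

theorem relocate_eq_or_adj (hs : IsWallVertex m m s) :
    relocate m s = s ∨ (wallG m m).Adj (relocate m s) s := by
  obtain ⟨i, j⟩ := s
  have hgrid := hs.mem_grid
  have hcases := relocate_eq_self_or m (i, j)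
  simp only [mem_product, mem_Icc] at hgrid hcases
  refine hcases.imp_right ?_
  rintro ⟨⟨hi, him⟩, ⟨rfl, hr⟩ | ⟨rfl, hr⟩⟩ <;> rw [hr] <;>
    apply wallG_adj_of_inner_row (by omega) (by omega)
  · exact gridMinusE_adj_horizontal hgrid.1.1 hgrid.1.2 le_rfl hgrid.2.2
  · exact (gridMinusE_adj_horizontal hgrid.1.1 hgrid.1.2 hgrid.2.1 le_rfl).symm

theorem eq_or_relocate_eq_self_of_relocate_eq (hs : IsWallVertex m m s) (ht : IsWallVertex m m t)
    (hst : relocate m s = relocate m t) : s = t ∨ relocate m s = s ∨ relocate m t = t := by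
  have hsgrid := hs.mem_grid
  have htgrid := ht.mem_grid
  simp only [mem_product, mem_Icc] at hsgrid htgrid
  rcases relocate_eq_self_or m s with hs' | ⟨-, hs'⟩
  · exact Or.inr (Or.inl hs')
  rcases relocate_eq_self_or m t with ht' | ⟨-, ht'⟩
  · exact Or.inr (Or.inr ht')
  left
  rcases hs' with ⟨hs2, hs'⟩ | ⟨hs2, hs'⟩ <;> rcases ht' with ⟨ht2, ht'⟩ | ⟨ht2, ht'⟩ <;>
    rw [hs', ht', Prod.mk.injEq] at hst <;> ext <;> omega

end Wall

/-- Observation: relocating wall-boundary sources to the grid boundary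
preserves the optimal value up to a constant factor, and solutions can be transformed
back. -/
theorem statement13 :
    ∃ c : ℝ, 0 < c ∧ ∀ m : ℕ, 0 < m → Even m →
      ∀ M : Finset DPair,
        (∀ p ∈ M, IsWallVertex m m p.1 ∧ IsWallVertex m m p.2) →
        DistinctSources M → DistinctDests M →
        (∀ p ∈ M, WallBoundary m p.1) →
        ∀ M' : Finset DPair, M' = M.image (fun p => (relocate m p.1, p.2)) →
          c * (OPTn (wallG m m) M : ℝ) ≤ (OPTn (wallG m m) M' : ℝ) ∧
          ∀ M'' ⊆ M', NodeDisjointRoutable (wallG m m) M'' →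
            ∃ M₀ ⊆ M, NodeDisjointRoutable (wallG m m) M₀ ∧
              c * (M''.card : ℝ) ≤ (M₀.card : ℝ) := by
  refine ⟨1 / 3, by norm_num, fun m _ _ M hM _ _ _ M' hM' => hM' ▸ statement13_general ?_ ?_⟩
  · exact fun p hp => relocate_eq_or_adj (hM p hp).1
  · exact fun p hp q hq => eq_or_relocate_eq_self_of_relocate_eq (hM p hp).1 (hM q hq).1
end
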